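/- Let τ = (τ, ℓ) be a decorated tree with ℓ(u) ≥ 2 for every vertex u of τ and |ℓ| > 1 + α. Then for every seed tree S of size k ≥ 2: E[F_{τ+τ}(T_n^S)] = O(n^{2|ℓ|/(1+α)}) as n → ∞. -/

import Mathlib

/-!
The overlap observable is dominated by an observable with an almost closed recursion.

Write `x_w = deg(w) - 1 + α` for the attachment weight of a vertex and `x^{(l)} = x(x+1)⋯(x+l-1)`.
For a tree `T` let `Q_P(T)` be the sum of `∏_w x_w^{(L_w)}` over all decorations `L` of the vertices
of `T` of total `P`, with connected support and with no `L_w` equal to `1` (`cfgSum`).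

* Two overlapping copies of `τ` have a connected union, and pushing both decorations forward to this
  union gives a decoration of total `2|ℓ|` with all nonzero values at least `2`. Since
  `[d-1]_a [d-1]_b ≤ x^{(a)} x^{(b)} ≤ x^{(a+b)}` and each decoration of `T` arises from boundedly
  many pairs of embeddings, `F_{τ+τ} ≤ C Q_{2|ℓ|}` (`Good.obsOverlapG_le`).
* Let `Z = (1+α)n - 2` be the total attachment weight. Because `x (x+1)^{(l)} = x^{(l)} (x+l)`, the
  weight of a fixed decoration grows on average by the exact factor `1 + P/Z`. A new leaf bearing
  the decoration `j ≥ 2` is either the whole support, contributing the constant `α^{(P)}`, or is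
  attached to a decorated vertex `u`; in the latter case the factor `x_u/Z` turns `(x_u+1)^{(l)}`
  into `x_u^{(l+1)}/Z`, so the contribution is at most a constant times `Q_{P-j+1}/Z`
  (`Good.step_le`). Since `j ≥ 2`, only totals smaller than `P` occur.
* By induction on `P`, `E[Q_P] = O(n^β)` as soon as `β > 1` and `β ≥ P/(1+α)`: the source terms are
  of order `n^(β'-1)` with `β' < β`, and a discrete Grönwall estimate (`le_rpow_of_recursion`)
  applies (`integral_cfgSum_le`). With `P = 2|ℓ|` and `β = 2|ℓ|/(1+α) > 2` this is the theorem.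
-/

open MeasureTheory Filter Asymptotics

noncomputable section

namespace AffinePA

instance (V : Type*) : MeasurableSpace (SimpleGraph V) := ⊤

/-- The degree of a vertex. -/
def degR {V : Type*} (G : SimpleGraph V) (v : V) : ℕ := Nat.card {w // G.Adj v w}

/-- The tree on `n+1` vertices obtained from `G` by attaching the new vertex to `u`. -/
def extendTree {n : ℕ} (G : SimpleGraph (Fin n)) (u : Fin n) : SimpleGraph (Fin (n + 1)) :=
  SimpleGraph.fromRel fun a b =>
    (∃ a' b' : Fin n, a = Fin.castSucc a' ∧ b = Fin.castSucc b' ∧ G.Adj a' b') ∨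
      (a = Fin.castSucc u ∧ b = Fin.last n)

/-- One step of the affine preferential attachment dynamics. -/
def stepMeasure (α : ℝ) {n : ℕ} (G : SimpleGraph (Fin n)) :
    Measure (SimpleGraph (Fin (n + 1))) :=
  ∑ u : Fin n,
    ENNReal.ofReal (((degR G u : ℝ) - 1 + α) / ((1 + α) * (n : ℝ) - 2)) •
      Measure.dirac (extendTree G u)

/-- The law of the α-PA tree with `m` added vertices, started from the seed `S`. -/
def paLaw (α : ℝ) {k : ℕ} (S : SimpleGraph (Fin k)) :
    (m : ℕ) → Measure (SimpleGraph (Fin (k + m)))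
  | 0 => Measure.dirac S
  | m + 1 => (paLaw α S m).bind (stepMeasure α)

/-- The weight `∏_u [deg_T(f u) - 1]_{ℓ u}` of a map `f`. -/
def embWeight {V W : Type*} [Fintype V] (T : SimpleGraph W) (ℓ : V → ℕ) (f : V → W) : ℝ :=
  ∏ u : V, ((degR T (f u) - 1).descFactorial (ℓ u) : ℝ)

/-- The observable `F_{(τ,ℓ)}(T)`. -/
def obsG {V W : Type*} [Fintype V] (τ : SimpleGraph V) (ℓ : V → ℕ) (T : SimpleGraph W) : ℝ :=
  ∑ᶠ φ : τ ↪g T, embWeight T ℓ ⇑φ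

/-- The weight `w(τ,ℓ)` of a decorated tree. -/
def weightG {V : Type*} [Fintype V] (τ : SimpleGraph V) (ℓ : V → ℕ) : ℕ :=
  if Fintype.card V ≤ 2 ∧ ∀ v, ℓ v = 0 then 1
  else (∑ v, ℓ v) + Nat.card {v // degR τ v = 1 ∧ ℓ v = 0}

/-- A decorated tree: a finite graph on `Fin n` with nonnegative integer decorations. -/
structure DecTree where
  n : ℕ
  tree : SimpleGraph (Fin n)
  dec : Fin n → ℕ

def DecTree.wt (τ : DecTree) : ℕ := weightG τ.tree τ.dec

def DecTree.decSum (τ : DecTree) : ℕ := ∑ v, τ.dec v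

def DecTree.obs (τ : DecTree) {W : Type*} (T : SimpleGraph W) : ℝ := obsG τ.tree τ.dec T

/-- The strict partial order `≺` on decorated trees. -/
def DecLt (σ τ : DecTree) : Prop :=
  (σ.wt < τ.wt ∧ σ.n ≤ τ.n) ∨ (σ.wt = τ.wt ∧ σ.n < τ.n) ∨
    (σ.wt = τ.wt ∧ σ.n = τ.n ∧ σ.decSum < τ.decSum)

open Classical in
/-- `F_{τ+τ}(T)`: sum over pairs of embeddings with overlapping images. -/
def obsOverlapG {V W : Type*} [Fintype V] (τ : SimpleGraph V) (ℓ : V → ℕ)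
    (T : SimpleGraph W) : ℝ :=
  ∑ᶠ (φ₁ : τ ↪g T) (φ₂ : τ ↪g T),
    if (Set.range ⇑φ₁ ∩ Set.range ⇑φ₂).Nonempty then
      embWeight T ℓ ⇑φ₁ * embWeight T ℓ ⇑φ₂
    else 0

open Classical in
/-- `F_{τ,σ}(T)`: sum over pairs of embeddings with disjoint images. -/
def obsDisjG {V₁ V₂ W : Type*} [Fintype V₁] [Fintype V₂] (τ : SimpleGraph V₁) (ℓτ : V₁ → ℕ)
    (σ : SimpleGraph V₂) (ℓσ : V₂ → ℕ) (T : SimpleGraph W) : ℝ :=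
  ∑ᶠ (φ₁ : τ ↪g T) (φ₂ : σ ↪g T),
    if Disjoint (Set.range ⇑φ₁) (Set.range ⇑φ₂) then
      embWeight T ℓτ ⇑φ₁ * embWeight T ℓσ ⇑φ₂
    else 0

/-- `f ≈ g` : same order of magnitude, eventually. -/
def asympEquiv (f g : ℕ → ℝ) : Prop :=
  ∃ C : ℝ, 0 < C ∧ ∀ᶠ n in atTop, f n ≤ C * g n ∧ g n ≤ C * f n

/-- Descending factorial `[x]_l` of a real number. -/
def descPoch (x : ℝ) (l : ℕ) : ℝ := ∏ i ∈ Finset.range l, (x - (i : ℝ))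

/-- Total variation distance between two measures. -/
def tvDist {X : Type*} [MeasurableSpace X] (μ ν : Measure X) : ℝ :=
  ⨆ s : {s : Set X // MeasurableSet s}, |(μ ↑s).toReal - (ν ↑s).toReal|

open Classical in
/-- The contribution to `F_τ` of embeddings whose image meets the seed. -/
def obsMeetSeed (k m : ℕ) {r : ℕ} (τ : SimpleGraph (Fin r)) (ℓ : Fin r → ℕ)
    (T : SimpleGraph (Fin (k + m))) : ℝ :=
  ∑ᶠ φ : τ ↪g T,
    if ∃ (x : Fin r) (y : Fin k), φ x = Fin.castAdd m y then embWeight T ℓ ⇑φ else 0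

/-- The contribution to `F_τ` of embeddings contained in the seed. -/
def obsInSeed (k m : ℕ) {r : ℕ} (τ : SimpleGraph (Fin r)) (ℓ : Fin r → ℕ)
    (S : SimpleGraph (Fin k)) (T : SimpleGraph (Fin (k + m))) : ℝ :=
  ∑ᶠ φ : τ ↪g S, embWeight T ℓ fun u => Fin.castAdd m (φ u)

/-- `D_{τ,d}(T)`: the number of perfect embeddings of `(τ,d)` in `T`. -/
def perfCount {V W : Type*} (τ : SimpleGraph V) (d : V → ℕ) (T : SimpleGraph W) : ℕ :=
  Nat.card {φ : τ ↪g T // ∀ u, degR T (φ u) = d u}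

/-- `τ` is `(T₁,T₂)`-blind. -/
def IsBlind {V W₁ W₂ : Type*} (τ : SimpleGraph V) (T₁ : SimpleGraph W₁)
    (T₂ : SimpleGraph W₂) : Prop :=
  ∀ d : V → ℕ, (∀ u, 1 ≤ d u) → perfCount τ d T₁ = perfCount τ d T₂

/-- `D_{σ,τ,d}(T)`: perfect embeddings of `(τ,d)` meeting the seed exactly in `φ(A)`. -/
def perfCountSeed (k m : ℕ) {r : ℕ} (τ : SimpleGraph (Fin r)) (A : Finset (Fin r))
    (d : Fin r → ℕ) (T : SimpleGraph (Fin (k + m))) : ℕ :=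
  Nat.card {φ : τ ↪g T //
    (∀ u, degR T (φ u) = d u) ∧ ∀ u : Fin r, (∃ y : Fin k, φ u = Fin.castAdd m y) ↔ u ∈ A}

/-- The σ-algebra generated by `T_0, …, T_m`. -/
def natFilt {Ω : Type*} [MeasurableSpace Ω] {k : ℕ}
    (T : (m : ℕ) → Ω → SimpleGraph (Fin (k + m))) (m : ℕ) : MeasurableSpace Ω :=
  ⨆ j ∈ Set.Iic m, MeasurableSpace.comap (T j) inferInstance

/-- `(T_m)` is an α-PA chain started from the seed `S`, on the probability space `(Ω,P)`. -/
structure IsPAChain (α : ℝ) {k : ℕ} (S : SimpleGraph (Fin k)) {Ω : Type*} [MeasurableSpace Ω]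
    (P : Measure Ω) (T : (m : ℕ) → Ω → SimpleGraph (Fin (k + m))) : Prop where
  isProb : IsProbabilityMeasure P
  meas : ∀ m, Measurable (T m)
  init : ∀ᵐ ω ∂P, T 0 ω = S
  step : ∀ (m : ℕ) (f : SimpleGraph (Fin (k + (m + 1))) → ℝ),
    P[(fun ω => f (T (m + 1) ω))|natFilt T m] =ᵐ[P]
      fun ω => ∫ G, f G ∂stepMeasure α (T m ω)

/-- The natural filtration of the chain. -/
def natFiltration {Ω : Type*} [mΩ : MeasurableSpace Ω] {k : ℕ}
    (T : (m : ℕ) → Ω → SimpleGraph (Fin (k + m))) (hT : ∀ m, Measurable (T m)) :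
    Filtration ℕ mΩ where
  seq := natFilt T
  mono' _ _ hij := biSup_mono fun _ hx => le_trans hx hij
  le' _ := iSup_le fun l => iSup_le fun _ => (hT l).comap_le

/-- Isomorphism of simple graphs as a setoid. -/
def isoSetoid (n : ℕ) : Setoid (SimpleGraph (Fin n)) where
  r G H := Nonempty (G ≃g H)
  iseqv := ⟨fun G => ⟨RelIso.refl G.Adj⟩, fun ⟨e⟩ => ⟨e.symm⟩, fun ⟨e⟩ ⟨f⟩ => ⟨e.trans f⟩⟩

/-- Isomorphism classes of graphs on `n` vertices. -/
def IsoClass (n : ℕ) : Type := Quotient (isoSetoid n)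

instance (n : ℕ) : MeasurableSpace (IsoClass n) := ⊤

/-- The law of the isomorphism class of the α-PA tree with `n` vertices grown from `S`. -/
def isoClassLaw (α : ℝ) {k : ℕ} (S : SimpleGraph (Fin k)) (n : ℕ) : Measure (IsoClass n) :=
  if h : k ≤ n then
    (paLaw α S (n - k)).map fun G =>
      Quotient.mk (isoSetoid n) (G.map (finCongr (Nat.add_sub_cancel' h)).toEmbedding)
  else 0


/-! ### Rising factorials -/

/-- The rising factorial `x (x + 1) ⋯ (x + l - 1)` of a real number. -/
def rise (x : ℝ) (l : ℕ) : ℝ := ∏ i ∈ Finset.range l, (x + (i : ℝ))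

lemma rise_zero (x : ℝ) : rise x 0 = 1 := by simp [rise]

lemma rise_succ (x : ℝ) (l : ℕ) : rise x (l + 1) = rise x l * (x + l) :=
  Finset.prod_range_succ _ _

lemma mul_rise_add_one (x : ℝ) (l : ℕ) : x * rise (x + 1) l = rise x (l + 1) := by
  unfold rise
  rw [Finset.prod_range_succ', mul_comm]
  congr 1
  · exact Finset.prod_congr rfl fun i _ => by push_cast; ring
  · simp

lemma rise_nonneg {x : ℝ} (hx : 0 ≤ x) (l : ℕ) : 0 ≤ rise x l :=
  Finset.prod_nonneg fun _ _ => by positivity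

lemma rise_mul_le {x : ℝ} (hx : 0 ≤ x) (a b : ℕ) : rise x a * rise x b ≤ rise x (a + b) := by
  induction b with
  | zero => simp [rise_zero]
  | succ b ih =>
    rw [rise_succ, ← add_assoc, rise_succ, ← mul_assoc]
    have : x + (b : ℝ) ≤ x + ((a + b : ℕ) : ℝ) := by push_cast; linarith [(a.cast_nonneg : (0:ℝ) ≤ a)]
    exact mul_le_mul ih this (by positivity) (rise_nonneg hx _)

lemma prod_rise_le {ι : Type*} {x : ℝ} (hx : 0 ≤ x) (s : Finset ι) (l : ι → ℕ) :
    ∏ i ∈ s, rise x (l i) ≤ rise x (∑ i ∈ s, l i) := by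
  classical
  induction s using Finset.induction_on with
  | empty => simp [rise_zero]
  | insert a s ha ih =>
    rw [Finset.prod_insert ha, Finset.sum_insert ha]
    exact (mul_le_mul_of_nonneg_left ih (rise_nonneg hx _)).trans (rise_mul_le hx _ _)

lemma descFactorial_le_rise {x : ℝ} {d : ℕ} (hx : (d : ℝ) ≤ x) (l : ℕ) :
    (d.descFactorial l : ℝ) ≤ rise x l := by
  have hx0 : 0 ≤ x := d.cast_nonneg.trans hx
  induction l with
  | zero => simp [rise_zero]
  | succ l ih =>
    rw [Nat.descFactorial_succ, rise_succ, Nat.cast_mul, mul_comm]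
    have : ((d - l : ℕ) : ℝ) ≤ x + l := by
      have : ((d - l : ℕ) : ℝ) ≤ d := by exact_mod_cast Nat.sub_le d l
      have := (l.cast_nonneg : (0:ℝ) ≤ l)
      linarith
    exact mul_le_mul ih this (by positivity) (rise_nonneg hx0 _)

/-- Comparison of two finite sums along an injection. -/
lemma sum_le_sum_of_inj {ι κ : Type*} {s : Finset ι} {t : Finset κ} {f : ι → ℝ} {g : κ → ℝ}
    (e : ι → κ) (hmaps : ∀ i ∈ s, e i ∈ t) (hinj : Set.InjOn e s)
    (hfg : ∀ i ∈ s, f i ≤ g (e i)) (hg : ∀ j ∈ t, 0 ≤ g j) :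
    ∑ i ∈ s, f i ≤ ∑ j ∈ t, g j := by
  classical
  calc ∑ i ∈ s, f i ≤ ∑ i ∈ s, g (e i) := Finset.sum_le_sum hfg
    _ = ∑ j ∈ s.image e, g j := (Finset.sum_image hinj).symm
    _ ≤ ∑ j ∈ t, g j := Finset.sum_le_sum_of_subset_of_nonneg
        (Finset.image_subset_iff.2 hmaps) fun j hj _ => hg j hj

/-! ### Attaching a leaf -/

section Extend

variable {n : ℕ} (G : SimpleGraph (Fin n)) (u : Fin n)

lemma extendTree_adj_castSucc (a b : Fin n) :
    (extendTree G u).Adj a.castSucc b.castSucc ↔ G.Adj a b := by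
  simp only [extendTree, SimpleGraph.fromRel_adj]
  constructor
  · rintro ⟨-, (⟨a', b', ha, hb, h⟩ | ⟨-, h⟩) | (⟨a', b', ha, hb, h⟩ | ⟨-, h⟩)⟩
    · rwa [Fin.castSucc_injective _ ha, Fin.castSucc_injective _ hb]
    · exact absurd h (Fin.castSucc_ne_last b)
    · rw [Fin.castSucc_injective _ ha, Fin.castSucc_injective _ hb]; exact h.symm
    · exact absurd h (Fin.castSucc_ne_last a)
  · intro h
    exact ⟨fun e => h.ne (Fin.castSucc_injective _ e), Or.inl (Or.inl ⟨a, b, rfl, rfl, h⟩)⟩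

lemma extendTree_adj_last (a : Fin n) :
    (extendTree G u).Adj a.castSucc (Fin.last n) ↔ a = u := by
  simp only [extendTree, SimpleGraph.fromRel_adj]
  constructor
  · rintro ⟨-, (⟨a', b', ha, hb, h⟩ | ⟨h, -⟩) | (⟨a', b', ha, hb, h⟩ | ⟨h, -⟩)⟩
    · exact absurd hb.symm (Fin.castSucc_ne_last b')
    · exact Fin.castSucc_injective _ h
    · exact absurd ha.symm (Fin.castSucc_ne_last a')
    · exact absurd h.symm (Fin.castSucc_ne_last u)
  · rintro rfl
    exact ⟨Fin.castSucc_ne_last a, Or.inl (Or.inr (by simp))⟩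

open Classical in
lemma degR_eq_sum (v : Fin n) : degR G v = ∑ w, if G.Adj v w then 1 else 0 := by
  rw [degR, Nat.card_eq_fintype_card, Fintype.card_subtype, Finset.card_filter]

lemma degR_extendTree_castSucc (v : Fin n) :
    degR (extendTree G u) v.castSucc = degR G v + if v = u then 1 else 0 := by
  classical
  rw [degR_eq_sum, Fin.sum_univ_castSucc, degR_eq_sum]
  simp only [extendTree_adj_castSucc, extendTree_adj_last]

lemma degR_extendTree_last : degR (extendTree G u) (Fin.last n) = 1 := by
  classical
  rw [degR_eq_sum, Fin.sum_univ_castSucc]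
  simp [SimpleGraph.adj_comm _ (Fin.last n), extendTree_adj_last]

end Extend

/-- The degree conditions that a tree on `n ≥ 2` vertices satisfies and that are all that is used
of the tree structure of `T_n^S`. -/
structure Good {n : ℕ} (G : SimpleGraph (Fin n)) : Prop where
  one_le : ∀ v, 1 ≤ degR G v
  sum_eq : ∑ v, (degR G v : ℝ) = 2 * n - 2

lemma Good.extend {n : ℕ} {G : SimpleGraph (Fin n)} (h : Good G) (u : Fin n) :
    Good (extendTree G u) where
  one_le v := by
    induction v using Fin.lastCases with
    | last => rw [degR_extendTree_last]
    | cast v => rw [degR_extendTree_castSucc]; have := h.one_le v; omega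
  sum_eq := by
    rw [Fin.sum_univ_castSucc]
    simp only [degR_extendTree_castSucc, degR_extendTree_last]
    push_cast
    rw [Finset.sum_add_distrib, h.sum_eq]
    simp
    ring

lemma good_of_isTree {k : ℕ} (hk : 2 ≤ k) {S : SimpleGraph (Fin k)} (hS : S.IsTree) : Good S := by
  classical
  have hdeg : ∀ v, degR S v = S.degree v := fun v => by
    rw [degR, Nat.card_eq_fintype_card, ← S.card_neighborSet_eq_degree]
    rfl
  have : Nontrivial (Fin k) := Fin.nontrivial_iff_two_le.2 hk
  refine ⟨fun v => ?_, ?_⟩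
  · rw [hdeg]
    exact hS.connected.preconnected.degree_pos_of_nontrivial v
  · have h1 := S.sum_degrees_eq_twice_card_edges
    have h2 := hS.card_edgeFinset
    rw [Fintype.card_fin] at h2
    simp only [hdeg]
    have h3 : (S.edgeFinset.card : ℝ) + 1 = k := by exact_mod_cast h2
    rw [← Nat.cast_sum, h1, ← h3]
    push_cast
    ring

/-- The unnormalised attachment probability `deg(v) - 1 + α` of the vertex `v`. -/
def attachWt (α : ℝ) {n : ℕ} (G : SimpleGraph (Fin n)) (v : Fin n) : ℝ := (degR G v : ℝ) - 1 + α

lemma Good.attachWt_nonneg {α : ℝ} (hα : 0 < α) {n : ℕ} {G : SimpleGraph (Fin n)} (h : Good G)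
    (v : Fin n) : 0 ≤ attachWt α G v := by
  have : (1 : ℝ) ≤ degR G v := by exact_mod_cast h.one_le v
  unfold attachWt
  linarith

lemma Good.sum_attachWt (α : ℝ) {n : ℕ} {G : SimpleGraph (Fin n)} (h : Good G) :
    ∑ v, attachWt α G v = (1 + α) * n - 2 := by
  simp only [attachWt, Finset.sum_add_distrib, Finset.sum_sub_distrib, h.sum_eq]
  simp
  ring

/-! ### Connected decorations and their observable -/

/-- Connectedness of the set `A` in the graph `G`, in cut form: every cut separating two points
of `A` is crossed by an edge of `G` inside `A`. -/
def IsConn {W : Type*} (G : SimpleGraph W) (A : Set W) : Prop :=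
  ∀ B : Set W, (∃ a ∈ A, a ∈ B) → (∃ a ∈ A, a ∉ B) → ∃ a ∈ A, ∃ b ∈ A, a ∈ B ∧ b ∉ B ∧ G.Adj a b

open Classical in
/-- The decorations of the vertices of `G` of total `P`, with connected support and without any
decoration equal to `1`. -/
def configs {n : ℕ} (G : SimpleGraph (Fin n)) (P : ℕ) : Finset (Fin n → ℕ) :=
  (Finset.piAntidiag Finset.univ P).filter fun L => (∀ w, L w ≠ 1) ∧ IsConn G {w | L w ≠ 0}

lemma mem_configs {n : ℕ} {G : SimpleGraph (Fin n)} {P : ℕ} {L : Fin n → ℕ} :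
    L ∈ configs G P ↔ ∑ w, L w = P ∧ (∀ w, L w ≠ 1) ∧ IsConn G {w | L w ≠ 0} := by
  simp [configs]

/-- The weight of a decoration of `G`: the product of the rising factorials of the attachment
weights. -/
def cfgWt (α : ℝ) {n : ℕ} (G : SimpleGraph (Fin n)) (L : Fin n → ℕ) : ℝ :=
  ∏ w, rise (attachWt α G w) (L w)

/-- The weight of a decoration of `G` once a leaf has been attached to `u`. -/
def cfgWtAt (α : ℝ) {n : ℕ} (G : SimpleGraph (Fin n)) (u : Fin n) (L : Fin n → ℕ) : ℝ :=
  ∏ w, rise (attachWt α G w + if w = u then 1 else 0) (L w)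

/-- The observable `Q_P(G)`: total weight of the connected decorations of total `P`. -/
def cfgSum (α : ℝ) (P : ℕ) {n : ℕ} (G : SimpleGraph (Fin n)) : ℝ :=
  ∑ L ∈ configs G P, cfgWt α G L

section Step

variable {α : ℝ} (hα : 0 < α) {n : ℕ} {G : SimpleGraph (Fin n)} (h : Good G)
include hα h

lemma Good.cfgWt_nonneg (L : Fin n → ℕ) : 0 ≤ cfgWt α G L :=
  Finset.prod_nonneg fun w _ => rise_nonneg (h.attachWt_nonneg hα w) _

lemma Good.cfgWtAt_nonneg (u : Fin n) (L : Fin n → ℕ) : 0 ≤ cfgWtAt α G u L :=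
  Finset.prod_nonneg fun w _ => rise_nonneg
    (add_nonneg (h.attachWt_nonneg hα w) (by split_ifs <;> norm_num)) _

lemma Good.cfgSum_nonneg (P : ℕ) : 0 ≤ cfgSum α P G :=
  Finset.sum_nonneg fun L _ => h.cfgWt_nonneg hα L

end Step

lemma cfgWt_extendTree (α : ℝ) {n : ℕ} (G : SimpleGraph (Fin n)) (u : Fin n)
    (L : Fin (n + 1) → ℕ) :
    cfgWt α (extendTree G u) L =
      rise α (L (Fin.last n)) * cfgWtAt α G u (fun w => L w.castSucc) := by
  rw [cfgWt, Fin.prod_univ_castSucc, mul_comm, cfgWtAt]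
  congr 1
  · simp [attachWt, degR_extendTree_last]
  · refine Finset.prod_congr rfl fun w _ => ?_
    rw [attachWt, degR_extendTree_castSucc, attachWt]
    push_cast
    congr 1
    ring

/-- The key identity for rising factorials: size-biasing by the attachment weight of `u` raises
the decoration of `u` by one. -/
lemma attachWt_mul_cfgWtAt (α : ℝ) {n : ℕ} (G : SimpleGraph (Fin n)) (u : Fin n) (L : Fin n → ℕ) :
    attachWt α G u * cfgWtAt α G u L = cfgWt α G (L + Pi.single u 1) := by
  rw [cfgWt, cfgWtAt, ← Finset.mul_prod_erase _ _ (Finset.mem_univ u),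
    ← Finset.mul_prod_erase _ _ (Finset.mem_univ u), ← mul_assoc]
  congr 1
  · simp [mul_rise_add_one]
  · refine Finset.prod_congr rfl fun w hw => ?_
    simp [Finset.ne_of_mem_erase hw]

lemma cfgWt_add_single (α : ℝ) {n : ℕ} (G : SimpleGraph (Fin n)) (u : Fin n) (L : Fin n → ℕ) :
    cfgWt α G (L + Pi.single u 1) = cfgWt α G L * (attachWt α G u + L u) := by
  rw [cfgWt, cfgWt, ← Finset.mul_prod_erase _ _ (Finset.mem_univ u),
    ← Finset.mul_prod_erase _ (fun w => rise (attachWt α G w) (L w)) (Finset.mem_univ u)]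
  rw [Finset.prod_congr rfl (g := fun w => rise (attachWt α G w) (L w))
    fun w hw => by simp [Finset.ne_of_mem_erase hw]]
  simp only [Pi.add_apply, Pi.single_eq_same, rise_succ]
  ring

/-- The weight of a fixed decoration grows on average by the exact factor `1 + |L| / Z`, where
`Z` is the total attachment weight. -/
lemma Good.sum_attachWt_mul_cfgWtAt (α : ℝ) {n : ℕ} {G : SimpleGraph (Fin n)} (h : Good G)
    (L : Fin n → ℕ) :
    ∑ u, attachWt α G u * cfgWtAt α G u L =
      cfgWt α G L * (((1 + α) * n - 2) + (∑ w, L w : ℕ)) := by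
  simp only [attachWt_mul_cfgWtAt, cfgWt_add_single]
  rw [← Finset.mul_sum, Finset.sum_add_distrib, h.sum_attachWt, Nat.cast_sum]

/-! ### The one-step recursion -/

section Step

variable {n : ℕ} {G : SimpleGraph (Fin n)} {u : Fin n}

/-- Removing the leaf attached to `u` preserves connectedness: a cut of the old vertices is
extended by putting the leaf on the side of `u`, so that no crossing edge ends at the leaf. -/
lemma IsConn.castSucc {A : Set (Fin (n + 1))} (hA : IsConn (extendTree G u) A) :
    IsConn G {w | w.castSucc ∈ A} := by
  rintro B ⟨a₀, ha₀, haB₀⟩ ⟨b₀, hb₀, hbB₀⟩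
  let B' : Set (Fin (n + 1)) := fun w => Fin.lastCases (motive := fun _ => Prop) (u ∈ B)
    (fun v => v ∈ B) w
  have hc : ∀ v : Fin n, v.castSucc ∈ B' ↔ v ∈ B := fun v => by
    change Fin.lastCases (motive := fun _ => Prop) (u ∈ B) (fun v => v ∈ B) v.castSucc ↔ _
    rw [Fin.lastCases_castSucc]
  have hl : Fin.last n ∈ B' ↔ u ∈ B := by
    change Fin.lastCases (motive := fun _ => Prop) (u ∈ B) (fun v => v ∈ B) (Fin.last n) ↔ _
    rw [Fin.lastCases_last]
  obtain ⟨a, ha, b, hb, haB, hbB, hab⟩ := hA B' ⟨_, ha₀, (hc _).2 haB₀⟩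
    ⟨_, hb₀, fun hh => hbB₀ ((hc _).1 hh)⟩
  induction a using Fin.lastCases with
  | last =>
    induction b using Fin.lastCases with
    | last => exact absurd hab (SimpleGraph.irrefl _)
    | cast b =>
      rw [SimpleGraph.adj_comm, extendTree_adj_last] at hab
      subst hab
      exact absurd ((hc _).2 (hl.1 haB)) hbB
  | cast a =>
    induction b using Fin.lastCases with
    | last =>
      rw [extendTree_adj_last] at hab
      subst hab
      exact absurd (hl.2 ((hc _).1 haB)) hbB
    | cast b =>
      exact ⟨a, ha, b, hb, (hc _).1 haB, fun hh => hbB ((hc _).2 hh),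
        (extendTree_adj_castSucc _ _ _ _).1 hab⟩

/-- A connected set containing the leaf attached to `u` and another vertex contains `u`. -/
lemma IsConn.castSucc_mem {A : Set (Fin (n + 1))} (hA : IsConn (extendTree G u) A)
    (hl : Fin.last n ∈ A) {w : Fin n} (hw : w.castSucc ∈ A) : u.castSucc ∈ A := by
  obtain ⟨a, ha, b, hb, haB, hbB, hab⟩ := hA {Fin.last n} ⟨_, hl, rfl⟩
    ⟨_, hw, Fin.castSucc_ne_last w⟩
  rw [Set.mem_singleton_iff] at haB
  subst haB
  induction b using Fin.lastCases with
  | last => exact absurd rfl hbB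
  | cast b =>
    rw [SimpleGraph.adj_comm, extendTree_adj_last] at hab
    rwa [← hab]

lemma configs_castSucc {P : ℕ} {L : Fin (n + 1) → ℕ} (hL : L ∈ configs (extendTree G u) P) :
    (fun w : Fin n => L w.castSucc) ∈ configs G (P - L (Fin.last n)) ∧ L (Fin.last n) ≤ P := by
  rw [mem_configs, Fin.sum_univ_castSucc] at hL
  obtain ⟨h1, h2, h3⟩ := hL
  exact ⟨mem_configs.2 ⟨by omega, fun w => h2 _, h3.castSucc⟩, by omega⟩

/-- Splitting of the decorations of the extended tree according to the decoration `j` of the new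
leaf: `j = 0`, or the leaf carries the whole decoration, or `2 ≤ j < P` and the neighbour `u` of
the leaf is decorated. -/
lemma Good.cfgSum_extend_le {α : ℝ} (hα : 0 < α) (h : Good G) (u : Fin n) (P : ℕ) :
    cfgSum α P (extendTree G u) ≤ ∑ L ∈ configs G P, cfgWtAt α G u L + rise α P +
      ∑ j ∈ Finset.Ico 2 P, rise α j *
        ∑ L ∈ configs G (P - j) with L u ≠ 0, cfgWtAt α G u L := by
  classical
  have hinj : ∀ L L' : Fin (n + 1) → ℕ, L (Fin.last n) = L' (Fin.last n) →
      (fun w : Fin n => L w.castSucc) = (fun w : Fin n => L' w.castSucc) → L = L' := by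
    intro L L' h1 h2
    funext w
    induction w using Fin.lastCases with
    | last => exact h1
    | cast w => exact congrFun h2 w
  rw [cfgSum, ← Finset.sum_filter_add_sum_filter_not _ (fun L => L (Fin.last n) = 0), add_assoc]
  refine add_le_add ?_ ?_
  · refine sum_le_sum_of_inj (fun L w => L w.castSucc) ?_ ?_ ?_ fun L _ => h.cfgWtAt_nonneg hα u L
    · intro L hL
      rw [Finset.mem_filter] at hL
      simpa [hL.2] using (configs_castSucc hL.1).1
    · intro L hL L' hL' e
      rw [Finset.mem_coe, Finset.mem_filter] at hL hL'
      exact hinj _ _ (hL.2.trans hL'.2.symm) e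
    · intro L hL
      rw [Finset.mem_filter] at hL
      rw [cfgWt_extendTree, hL.2, rise_zero, one_mul]
  · rw [← Finset.sum_filter_add_sum_filter_not _ (fun L => ∀ w : Fin n, L w.castSucc = 0)]
    refine add_le_add ?_ ?_
    · have := sum_le_sum_of_inj (f := cfgWt α (extendTree G u)) (g := fun _ : Unit => rise α P)
        (s := ((configs (extendTree G u) P).filter (fun L => ¬ L (Fin.last n) = 0)).filter
          (fun L => ∀ w : Fin n, L w.castSucc = 0)) (t := {()}) (fun _ => ()) ?_ ?_ ?_ ?_
      · simpa using this
      · simp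
      · intro L hL L' hL' _
        simp only [Finset.coe_filter, Set.mem_ofPred_eq, Finset.mem_filter, mem_configs,
          Fin.sum_univ_castSucc] at hL hL'
        refine hinj _ _ ?_ (funext fun w => (hL.2 w).trans (hL'.2 w).symm)
        have h1 := hL.1.1.1
        have h2 := hL'.1.1.1
        rw [Finset.sum_eq_zero fun w _ => hL.2 w] at h1
        rw [Finset.sum_eq_zero fun w _ => hL'.2 w] at h2
        omega
      · intro L hL
        simp only [Finset.mem_filter, mem_configs, Fin.sum_univ_castSucc] at hL
        have h1 := hL.1.1.1
        rw [Finset.sum_eq_zero fun w _ => hL.2 w, zero_add] at h1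
        rw [cfgWt_extendTree, h1]
        simp [cfgWtAt, hL.2, rise_zero]
      · exact fun _ _ => rise_nonneg hα.le _
    · simp only [Finset.mul_sum]
      rw [Finset.sum_sigma']
      refine sum_le_sum_of_inj
        (fun L => (⟨L (Fin.last n), fun w => L w.castSucc⟩ : (_ : ℕ) × (Fin n → ℕ))) ?_ ?_ ?_ ?_
      · intro L hL
        rw [Finset.mem_filter, Finset.mem_filter] at hL
        obtain ⟨⟨hL, h0⟩, hw⟩ := hL
        push Not at hw
        obtain ⟨w, hw⟩ := hw
        obtain ⟨h1, h2⟩ := configs_castSucc hL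
        have hL' := hL
        rw [mem_configs, Fin.sum_univ_castSucc] at hL
        have h3 := hL.2.1 (Fin.last n)
        have h4 : L w.castSucc ≤ ∑ w : Fin n, L w.castSucc :=
          Finset.single_le_sum (f := fun w : Fin n => L w.castSucc) (fun _ _ => Nat.zero_le _)
            (Finset.mem_univ w)
        simp only [Finset.mem_sigma, Finset.mem_Ico, Finset.mem_filter]
        exact ⟨⟨by omega, by omega⟩, h1, hL.2.2.castSucc_mem h0 hw⟩
      · intro L _ L' _ e
        simp only [Sigma.mk.injEq, heq_eq_eq] at e
        exact hinj _ _ e.1 e.2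
      · intro L _
        rw [cfgWt_extendTree]
      · intro x _
        exact mul_nonneg (rise_nonneg hα.le _) (h.cfgWtAt_nonneg hα u _)

/-- Grafting a new leaf onto a decorated vertex `u` raises the decoration of `u` by one; each
resulting decoration of total `p + 1` arises from at most `p + 1` choices of `u`. -/
lemma Good.sum_attachWt_mul_graft_le {α : ℝ} (hα : 0 < α) (h : Good G) (p : ℕ) :
    ∑ u, attachWt α G u * ∑ L ∈ configs G p with L u ≠ 0, cfgWtAt α G u L ≤
      ((p + 1 : ℕ) : ℝ) * cfgSum α (p + 1) G := by
  classical
  have key : ∀ u, attachWt α G u * ∑ L ∈ configs G p with L u ≠ 0, cfgWtAt α G u L ≤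
      ∑ L ∈ configs G (p + 1), (L u : ℝ) * cfgWt α G L := by
    intro u
    rw [Finset.mul_sum]
    refine sum_le_sum_of_inj (fun L => L + Pi.single u 1) ?_ ?_ ?_ ?_
    · intro L hL
      rw [Finset.mem_filter, mem_configs] at hL
      obtain ⟨⟨h1, h2, h3⟩, h4⟩ := hL
      refine mem_configs.2 ⟨?_, ?_, ?_⟩
      · simp [Finset.sum_add_distrib, h1]
      · intro w
        by_cases hw : w = u
        · subst hw
          simpa using h4
        · simpa [hw] using h2 w
      · convert h3 using 3 with w
        by_cases hw : w = u
        · subst hw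
          simpa using h4
        · simp [hw]
    · intro L _ L' _ e
      exact add_right_cancel e
    · intro L _
      rw [attachWt_mul_cfgWtAt]
      refine le_mul_of_one_le_left (h.cfgWt_nonneg hα _) ?_
      simp
    · intro L _
      exact mul_nonneg (Nat.cast_nonneg _) (h.cfgWt_nonneg hα _)
  refine (Finset.sum_le_sum fun u _ => key u).trans (le_of_eq ?_)
  rw [Finset.sum_comm, cfgSum, Finset.mul_sum]
  refine Finset.sum_congr rfl fun L hL => ?_
  rw [← Finset.sum_mul, ← Nat.cast_sum, (mem_configs.1 hL).1]

/-- The conditional expectation of `Q_P` after one step: exact growth by `1 + P / Z`, up to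
contributions of strictly smaller totals. -/
lemma Good.step_le {α : ℝ} (hα : 0 < α) (h : Good G) (hZ : 0 < (1 + α) * (n : ℝ) - 2) (P : ℕ) :
    ∑ u, attachWt α G u / ((1 + α) * (n : ℝ) - 2) * cfgSum α P (extendTree G u) ≤
      (1 + P / ((1 + α) * (n : ℝ) - 2)) * cfgSum α P G + rise α P +
        ∑ j ∈ Finset.Ico 2 P, rise α j / ((1 + α) * (n : ℝ) - 2) *
          (((P - j + 1 : ℕ) : ℝ) * cfgSum α (P - j + 1) G) := by
  set Z := (1 + α) * (n : ℝ) - 2 with hZdef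
  have h1 : ∑ u, attachWt α G u * ∑ L ∈ configs G P, cfgWtAt α G u L = (Z + P) * cfgSum α P G := by
    simp only [Finset.mul_sum]
    rw [Finset.sum_comm, cfgSum, Finset.mul_sum]
    refine Finset.sum_congr rfl fun L hL => ?_
    rw [h.sum_attachWt_mul_cfgWtAt, (mem_configs.1 hL).1, mul_comm]
  have h2 : ∑ u, attachWt α G u * cfgSum α P (extendTree G u) ≤
      (Z + P) * cfgSum α P G + Z * rise α P + ∑ j ∈ Finset.Ico 2 P, rise α j *
        (((P - j + 1 : ℕ) : ℝ) * cfgSum α (P - j + 1) G) := by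
    refine (Finset.sum_le_sum fun u _ => mul_le_mul_of_nonneg_left (h.cfgSum_extend_le hα u P)
      (h.attachWt_nonneg hα u)).trans ?_
    simp only [mul_add, Finset.sum_add_distrib]
    rw [h1, ← Finset.sum_mul, h.sum_attachWt]
    refine add_le_add le_rfl ?_
    simp only [Finset.mul_sum (Finset.Ico 2 P)]
    rw [Finset.sum_comm]
    refine Finset.sum_le_sum fun j _ => ?_
    calc _ = rise α j * ∑ u, attachWt α G u *
          ∑ L ∈ configs G (P - j) with L u ≠ 0, cfgWtAt α G u L := by
          rw [Finset.mul_sum]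
          exact Finset.sum_congr rfl fun u _ => by ring
      _ ≤ _ := mul_le_mul_of_nonneg_left (h.sum_attachWt_mul_graft_le hα (P - j))
          (rise_nonneg hα.le _)
  have h3 : ∑ u, attachWt α G u / Z * cfgSum α P (extendTree G u) =
      (∑ u, attachWt α G u * cfgSum α P (extendTree G u)) / Z := by
    rw [Finset.sum_div]
    exact Finset.sum_congr rfl fun u _ => by ring
  have h4 : ∑ j ∈ Finset.Ico 2 P, rise α j / Z *
      (((P - j + 1 : ℕ) : ℝ) * cfgSum α (P - j + 1) G) = (∑ j ∈ Finset.Ico 2 P, rise α j *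
        (((P - j + 1 : ℕ) : ℝ) * cfgSum α (P - j + 1) G)) / Z := by
    rw [Finset.sum_div]
    exact Finset.sum_congr rfl fun u _ => by ring
  rw [h3, h4, div_le_iff₀ hZ]
  refine h2.trans (le_of_eq ?_)
  field_simp

end Step

/-! ### Comparison of the overlap observable with `Q_P` -/

section Overlap

/-- The push-forward of a decoration `l` of `V` along a map `f`. -/
def pushDec {V W : Type*} [Fintype V] [DecidableEq W] (l : V → ℕ) (f : V → W) (w : W) : ℕ :=
  ∑ v with f v = w, l v

variable {V : Type*} [Fintype V] {n : ℕ} {G : SimpleGraph (Fin n)}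

lemma pushDec_apply_ge (l : V → ℕ) (f : V → Fin n) (v : V) : l v ≤ pushDec l f (f v) :=
  Finset.single_le_sum (f := l) (fun _ _ => Nat.zero_le _) (by simp)

lemma sum_pushDec (l : V → ℕ) (f : V → Fin n) : ∑ w, pushDec l f w = ∑ v, l v :=
  Finset.sum_fiberwise _ _ _

lemma pushDec_ne_zero_iff {l : V → ℕ} (hl : ∀ v, 2 ≤ l v) (f : V → Fin n) (w : Fin n) :
    pushDec l f w ≠ 0 ↔ w ∈ Set.range f := by
  constructor
  · intro hw
    obtain ⟨v, hv, -⟩ := Finset.exists_ne_zero_of_sum_ne_zero hw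
    exact ⟨v, (Finset.mem_filter.1 hv).2⟩
  · rintro ⟨v, rfl⟩
    have := pushDec_apply_ge l f v
    have := hl v
    omega

lemma Good.prod_rise_le_cfgWt {α : ℝ} (hα : 0 < α) (h : Good G) (l : V → ℕ) (f : V → Fin n) :
    ∏ v, rise (attachWt α G (f v)) (l v) ≤ cfgWt α G (pushDec l f) := by
  rw [← Finset.prod_fiberwise _ f, cfgWt]
  refine Finset.prod_le_prod
    (fun w _ => Finset.prod_nonneg fun v _ => rise_nonneg (h.attachWt_nonneg hα _) _)
    fun w _ => ?_
  rw [Finset.prod_congr rfl (g := fun v => rise (attachWt α G w) (l v))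
    fun v hv => by rw [(Finset.mem_filter.1 hv).2]]
  exact prod_rise_le (h.attachWt_nonneg hα w) _ _

open Classical in
/-- The total weight of the maps from `V` with connected image is at most a constant times `Q_P`:
a decoration of total `P` is the push-forward of `l` under at most `P ^ |V|` maps. -/
lemma Good.sum_maps_le [DecidableEq V] {α : ℝ} (hα : 0 < α) (h : Good G) {l : V → ℕ} (hl : ∀ v, 2 ≤ l v) {P : ℕ}
    (hP : ∑ v, l v = P) :
    ∑ f : V → Fin n, (if IsConn G (Set.range f) then cfgWt α G (pushDec l f) else 0) ≤
      (P : ℝ) ^ Fintype.card V * cfgSum α P G := by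
  rw [← Finset.sum_filter, cfgSum, Finset.mul_sum,
    ← Finset.sum_fiberwise_of_maps_to (t := configs G P) (g := fun f => pushDec l f)]
  · refine Finset.sum_le_sum fun L hL => ?_
    rw [Finset.sum_congr rfl (g := fun _ => cfgWt α G L)
      fun f hf => by rw [(Finset.mem_filter.1 hf).2], Finset.sum_const, nsmul_eq_mul]
    refine mul_le_mul_of_nonneg_right ?_ (h.cfgWt_nonneg hα L)
    -- A map with push-forward `L` takes its values in the support of `L`, of size at most `P`.
    have h1 : {w | L w ≠ 0}.toFinset.card ≤ P := by
      rw [← (mem_configs.1 hL).1]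
      calc {w | L w ≠ 0}.toFinset.card = ∑ w ∈ {w | L w ≠ 0}.toFinset, 1 := by simp
        _ ≤ ∑ w ∈ {w | L w ≠ 0}.toFinset, L w := Finset.sum_le_sum fun w hw => by
            have : L w ≠ 0 := by simpa using hw
            omega
        _ ≤ ∑ w, L w := Finset.sum_le_sum_of_subset (Finset.subset_univ _)
    have h2 := Finset.card_le_card (s := Finset.filter (fun f => pushDec l f = L)
      (Finset.filter (fun f : V → Fin n => IsConn G (Set.range f)) Finset.univ))
      (t := Fintype.piFinset fun _ => {w | L w ≠ 0}.toFinset) (by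
        intro f hf
        rw [Finset.mem_filter] at hf
        rw [Fintype.mem_piFinset]
        intro v
        rw [Set.mem_toFinset, ← hf.2]
        exact (pushDec_ne_zero_iff hl f _).2 ⟨v, rfl⟩)
    rw [Fintype.card_piFinset, Finset.prod_const, Finset.card_univ] at h2
    exact_mod_cast h2.trans (Nat.pow_le_pow_left h1 _)
  · intro f hf
    refine mem_configs.2 ⟨(sum_pushDec l f).trans hP, fun w => ?_, ?_⟩
    · by_cases hw : pushDec l f w = 0
      · simp [hw]
      · obtain ⟨v, rfl⟩ := (pushDec_ne_zero_iff hl f w).1 hw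
        have := pushDec_apply_ge l f v
        have := hl v
        omega
    · convert (Finset.mem_filter.1 hf).2 using 1
      ext w
      exact pushDec_ne_zero_iff hl f w

omit [Fintype V] in
/-- The union of two overlapping copies of a connected graph is connected. -/
lemma isConn_overlap {W : Type*} {τ : SimpleGraph V} {T : SimpleGraph W} (hτ : τ.Preconnected)
    (φ₁ φ₂ : τ ↪g T) (ho : (Set.range φ₁ ∩ Set.range φ₂).Nonempty) :
    IsConn T (Set.range (Sum.elim φ₁ φ₂)) := by
  rintro B ⟨a, ha, haB⟩ ⟨b, hb, hbB⟩
  have key : ∀ φ : τ ↪g T, (∀ v, φ v ∈ Set.range (Sum.elim φ₁ φ₂)) →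
      ∀ x y, φ x ∈ B → φ y ∉ B → ∃ a ∈ Set.range (Sum.elim φ₁ φ₂),
        ∃ b ∈ Set.range (Sum.elim φ₁ φ₂), a ∈ B ∧ b ∉ B ∧ T.Adj a b := by
    intro φ hφ x y hx hy
    obtain ⟨p⟩ := hτ x y
    obtain ⟨d, -, h1, h2⟩ := p.exists_boundary_dart (φ ⁻¹' B) hx hy
    exact ⟨_, hφ d.fst, _, hφ d.snd, h1, h2, φ.map_adj_iff.2 d.adj⟩
  have k1 := key φ₁ fun v => ⟨Sum.inl v, rfl⟩
  have k2 := key φ₂ fun v => ⟨Sum.inr v, rfl⟩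
  obtain ⟨c, ⟨x₁, h₁⟩, ⟨x₂, h₂⟩⟩ := ho
  -- The common point `c` lies on one side of the cut; connect it to a point on the other side.
  by_cases hc : c ∈ B
  · obtain ⟨v | v, rfl⟩ := hb
    · exact k1 x₁ v (h₁ ▸ hc) hbB
    · exact k2 x₂ v (h₂ ▸ hc) hbB
  · obtain ⟨v | v, rfl⟩ := ha
    · exact k1 v x₁ haB (h₁ ▸ hc)
    · exact k2 v x₂ haB (h₂ ▸ hc)

lemma Good.embWeight_le {α : ℝ} (hα : 0 < α) (h : Good G) (l : V → ℕ) (f : V → Fin n) :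
    embWeight G l f ≤ ∏ v, rise (attachWt α G (f v)) (l v) := by
  refine Finset.prod_le_prod (fun v _ => Nat.cast_nonneg _) fun v _ => descFactorial_le_rise ?_ _
  rw [Nat.cast_sub (h.one_le _), attachWt]
  push_cast
  linarith

/-- The overlap observable is at most a constant multiple of `Q_{2|ℓ|}`. -/
lemma Good.obsOverlapG_le {α : ℝ} (hα : 0 < α) (h : Good G) {τ : SimpleGraph V}
    (hτ : τ.Preconnected) {l : V → ℕ} (hl : ∀ v, 2 ≤ l v) :
    obsOverlapG τ l G ≤ ((2 * ∑ v, l v : ℕ) : ℝ) ^ Fintype.card (V ⊕ V) *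
      cfgSum α (2 * ∑ v, l v) G := by
  classical
  have : Finite (τ ↪g G) := DFunLike.finite _
  have : Fintype (τ ↪g G) := Fintype.ofFinite _
  refine le_trans ?_ (h.sum_maps_le hα (l := Sum.elim l l) (by rintro (v | v) <;> exact hl v)
    (P := 2 * ∑ v, l v) (by simp [two_mul]))
  simp only [obsOverlapG, finsum_eq_sum_of_fintype]
  rw [← Finset.sum_product']
  refine sum_le_sum_of_inj (fun p => Sum.elim p.1 p.2) (fun _ _ => Finset.mem_univ _) ?_ ?_ ?_
  · intro p _ q _ e
    refine Prod.ext (DFunLike.ext _ _ fun v => ?_) (DFunLike.ext _ _ fun v => ?_)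
    · exact congrFun e (Sum.inl v)
    · exact congrFun e (Sum.inr v)
  · intro p _
    by_cases ho : (Set.range p.1 ∩ Set.range p.2).Nonempty
    · rw [if_pos ho, if_pos (isConn_overlap hτ _ _ ho)]
      refine le_trans ?_ (h.prod_rise_le_cfgWt hα _ _)
      rw [Fintype.prod_sum_type]
      exact mul_le_mul (h.embWeight_le hα _ _) (h.embWeight_le hα _ _)
        (Finset.prod_nonneg fun v _ => Nat.cast_nonneg _)
        (Finset.prod_nonneg fun v _ => rise_nonneg (h.attachWt_nonneg hα _) _)
    · rw [if_neg ho]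
      split_ifs
      · exact h.cfgWt_nonneg hα _
      · exact le_rfl
  · intro f _
    split_ifs
    · exact h.cfgWt_nonneg hα _
    · exact le_rfl

lemma obsOverlapG_nonneg {W : Type*} (τ : SimpleGraph V) (l : V → ℕ) (T : SimpleGraph W) :
    0 ≤ obsOverlapG τ l T := by
  refine finsum_nonneg fun φ₁ => finsum_nonneg fun φ₂ => ?_
  split_ifs
  · exact mul_nonneg (Finset.prod_nonneg fun v _ => Nat.cast_nonneg _)
      (Finset.prod_nonneg fun v _ => Nat.cast_nonneg _)
  · exact le_rfl

end Overlap

/-! ### The law of the chain -/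

lemma measurableSet_graph {X : Type*} (s : Set (SimpleGraph X)) : MeasurableSet s := trivial

lemma aemeasurable_graph {X Y : Type*} [MeasurableSpace Y] (f : SimpleGraph X → Y)
    (μ : Measure (SimpleGraph X)) : AEMeasurable f μ := by
  have : Measurable f := fun _ _ => trivial
  exact this.aemeasurable

lemma integrable_graph {n : ℕ} (μ : Measure (SimpleGraph (Fin n))) [IsFiniteMeasure μ]
    (f : SimpleGraph (Fin n) → ℝ) : Integrable f μ := by
  have : MeasurableSingletonClass (SimpleGraph (Fin n)) := ⟨fun _ => trivial⟩
  exact Integrable.of_finite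

lemma lintegral_stepMeasure (α : ℝ) {n : ℕ} (G : SimpleGraph (Fin n))
    (f : SimpleGraph (Fin (n + 1)) → ENNReal) :
    ∫⁻ H, f H ∂stepMeasure α G =
      ∑ u, ENNReal.ofReal (attachWt α G u / ((1 + α) * (n : ℝ) - 2)) * f (extendTree G u) := by
  have hf : Measurable f := fun _ _ => trivial
  rw [stepMeasure, lintegral_finsetSum_measure]
  refine Finset.sum_congr rfl fun u _ => ?_
  rw [lintegral_smul_measure, lintegral_dirac' _ hf, attachWt, smul_eq_mul]

lemma stepMeasure_compl_good {α : ℝ} {n : ℕ} {G : SimpleGraph (Fin n)} (h : Good G) :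
    stepMeasure α G {H | ¬ Good H} = 0 := by
  rw [stepMeasure, Measure.finsetSum_apply]
  refine Finset.sum_eq_zero fun u _ => ?_
  rw [Measure.smul_apply, Measure.dirac_apply' _ (measurableSet_graph _)]
  simp [h.extend u]

lemma ae_good (α : ℝ) {k : ℕ} {S : SimpleGraph (Fin k)} (hS : Good S) (m : ℕ) :
    ∀ᵐ G ∂paLaw α S m, Good G := by
  induction m with
  | zero =>
    rw [paLaw, ae_iff, Measure.dirac_apply' _ (measurableSet_graph _)]
    simp [hS]
  | succ m ih =>
    rw [paLaw, ae_iff, Measure.bind_apply (measurableSet_graph _) (aemeasurable_graph _ _)]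
    exact (lintegral_congr_ae (g := fun _ => 0)
      (ih.mono fun G hG => stepMeasure_compl_good hG)).trans (by simp)

section Law

variable {α : ℝ} (hα : 0 < α) {k : ℕ} (hk : 2 ≤ k) {S : SimpleGraph (Fin k)} (hS : Good S)
include hα hk

/-- The shifted time `n - 2 / (1 + α)`, in which the growth factor `1 + P / ((1 + α) n - 2)` is
exactly `1 + (P / (1 + α)) / y`. -/
lemma totalWt_eq (m : ℕ) :
    (1 + α) * ((k + m : ℕ) : ℝ) - 2 = (1 + α) * ((k - 2 / (1 + α)) + m) ∧
      0 < (k : ℝ) - 2 / (1 + α) := by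
  have h1 : 0 < 1 + α := by linarith
  have h2 : (2 : ℝ) ≤ k := by exact_mod_cast hk
  refine ⟨by push_cast; field_simp; ring, ?_⟩
  rw [sub_pos, div_lt_iff₀ h1]
  nlinarith

lemma totalWt_pos (m : ℕ) : 0 < (1 + α) * ((k + m : ℕ) : ℝ) - 2 := by
  obtain ⟨h1, h2⟩ := totalWt_eq hα hk m
  rw [h1]
  positivity

include hS

lemma isProbabilityMeasure_paLaw (m : ℕ) : IsProbabilityMeasure (paLaw α S m) := by
  induction m with
  | zero => rw [paLaw]; infer_instance
  | succ m ih =>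
    refine ⟨?_⟩
    rw [paLaw, Measure.bind_apply MeasurableSet.univ (aemeasurable_graph _ _)]
    rw [lintegral_congr_ae (g := fun _ => 1) ((ae_good α hS m).mono fun G hG => ?_)]
    · simp
    · have hZ := totalWt_pos hα hk m
      have h1 := lintegral_stepMeasure α G (fun _ => 1)
      simp only [lintegral_const, one_mul, mul_one] at h1
      simp only [h1]
      rw [← ENNReal.ofReal_sum_of_nonneg fun u _ => div_nonneg (hG.attachWt_nonneg hα u) hZ.le,
        ← Finset.sum_div, hG.sum_attachWt, div_self hZ.ne', ENNReal.ofReal_one]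

/-- Transfer of a one-step conditional bound to expectations. -/
lemma integral_succ_le (m : ℕ) {f : SimpleGraph (Fin (k + m + 1)) → ℝ}
    {g : SimpleGraph (Fin (k + m)) → ℝ} (hf : ∀ G, Good G → 0 ≤ f G)
    (hfg : ∀ G, Good G → ∑ u, attachWt α G u / ((1 + α) * ((k + m : ℕ) : ℝ) - 2) *
      f (extendTree G u) ≤ g G) :
    ∫ G, f G ∂paLaw α S (m + 1) ≤ ∫ G, g G ∂paLaw α S m := by
  have hp := isProbabilityMeasure_paLaw hα hk hS
  have hZ := totalWt_pos hα hk m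
  have hp0 : ∀ G : SimpleGraph (Fin (k + m)), Good G → ∀ u,
      0 ≤ attachWt α G u / ((1 + α) * ((k + m : ℕ) : ℝ) - 2) :=
    fun G hG u => div_nonneg (hG.attachWt_nonneg hα u) hZ.le
  have hg : ∀ G, Good G → 0 ≤ g G := fun G hG => le_trans
    (Finset.sum_nonneg fun u _ => mul_nonneg (hp0 G hG u) (hf _ (hG.extend u))) (hfg G hG)
  rw [integral_eq_lintegral_of_nonneg_ae ((ae_good α hS (m + 1)).mono hf)
      (integrable_graph _ _).aestronglyMeasurable,
    integral_eq_lintegral_of_nonneg_ae ((ae_good α hS m).mono hg)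
      (integrable_graph _ _).aestronglyMeasurable]
  refine ENNReal.toReal_mono ?_ ?_
  · exact (hasFiniteIntegral_iff_ofReal ((ae_good α hS m).mono hg)).1
      (integrable_graph _ _).hasFiniteIntegral |>.ne
  · refine (Measure.lintegral_bind_le _ _ _).trans (lintegral_mono_ae
      ((ae_good α hS m).mono fun G hG => ?_))
    refine (lintegral_stepMeasure α G fun H => ENNReal.ofReal (f H)).le.trans ?_
    simp only [← ENNReal.ofReal_mul (hp0 G hG _)]
    rw [← ENNReal.ofReal_sum_of_nonneg
      fun u _ => mul_nonneg (hp0 G hG u) (hf _ (hG.extend u))]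
    exact ENNReal.ofReal_le_ofReal (hfg G hG)

/-- The recursion for `E[Q_P]`. -/
lemma integral_cfgSum_succ_le (P m : ℕ) :
    ∫ G, cfgSum α P G ∂paLaw α S (m + 1) ≤
      (1 + P / ((1 + α) * ((k + m : ℕ) : ℝ) - 2)) * (∫ G, cfgSum α P G ∂paLaw α S m) +
        rise α P + ∑ j ∈ Finset.Ico 2 P, rise α j / ((1 + α) * ((k + m : ℕ) : ℝ) - 2) *
          (((P - j + 1 : ℕ) : ℝ) * ∫ G, cfgSum α (P - j + 1) G ∂paLaw α S m) := by
  have hp := isProbabilityMeasure_paLaw hα hk hS m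
  refine (integral_succ_le hα hk hS m (fun G hG => hG.cfgSum_nonneg hα P)
    fun G hG => hG.step_le hα (totalWt_pos hα hk m) P).trans (le_of_eq ?_)
  rw [integral_add (integrable_graph _ _) (integrable_graph _ _),
    integral_add (integrable_graph _ _) (integrable_graph _ _),
    integral_finsetSum _ fun _ _ => integrable_graph _ _]
  simp [integral_const_mul]

end Law

/-! ### Solving the recursion -/

/-- A discrete Grönwall estimate: growth by the factor `1 + γ / y` with `γ ≤ β`, up to a source
term of order `y ^ (β - 1 - ε)`, gives growth of order at most `y ^ β`. By Bernoulli's inequality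
`a / y ^ β` increases by at most `C * y ^ (-1 - ε)`, which is summable. -/
lemma le_rpow_of_recursion {a : ℕ → ℝ} (ha : ∀ m, 0 ≤ a m) {y β γ ε C : ℝ} (hy : 0 < y)
    (hβ : 1 ≤ β) (hγ : γ ≤ β) (hε : 0 < ε) (hC : 0 ≤ C)
    (h : ∀ m : ℕ, a (m + 1) ≤ (1 + γ / (y + m)) * a m + C * (y + m) ^ (β - 1 - ε)) :
    ∃ K, 0 ≤ K ∧ ∀ m : ℕ, a m ≤ K * (y + m) ^ β := by
  have hym : ∀ m : ℕ, 0 < y + m := fun m => by positivity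
  have hsum : Summable fun i : ℕ => (y + i) ^ (-1 - ε) := by
    refine ((Real.summable_one_div_nat_add_rpow y (1 + ε)).2 (by linarith)).congr fun i => ?_
    rw [show (-1 - ε) = -(1 + ε) by ring, Real.rpow_neg (hym i).le, one_div, add_comm,
      abs_of_pos (hym i)]
  have hpos : ∀ i : ℕ, 0 ≤ (y + i) ^ (-1 - ε) := fun i => (Real.rpow_pos_of_pos (hym i) _).le
  have key : ∀ m : ℕ, a m ≤
      (a 0 / y ^ β + C * ∑ i ∈ Finset.range m, (y + i) ^ (-1 - ε)) * (y + m) ^ β := by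
    intro m
    induction m with
    | zero => simp [(Real.rpow_pos_of_pos hy β).ne']
    | succ m ih =>
      rw [Finset.sum_range_succ]
      set q := a 0 / y ^ β + C * ∑ i ∈ Finset.range m, (y + i) ^ (-1 - ε) with hq
      have hq0 : 0 ≤ q := add_nonneg (div_nonneg (ha 0) (Real.rpow_pos_of_pos hy _).le)
        (mul_nonneg hC (Finset.sum_nonneg fun i _ => hpos i))
      have hz := hym m
      push_cast
      rw [← add_assoc]
      set z := y + (m : ℝ) with hzdef
      have hzβ := Real.rpow_pos_of_pos hz β
      have hbern : (1 + β / z) * z ^ β ≤ (z + 1) ^ β := by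
        have h1 := one_add_mul_self_le_rpow_one_add (s := 1 / z)
          ((by norm_num : (-1 : ℝ) ≤ 0).trans (by positivity)) hβ
        have h2 : (z + 1) ^ β = (1 + 1 / z) ^ β * z ^ β := by
          rw [← Real.mul_rpow (by positivity) hz.le]
          congr 1
          field_simp
        rw [h2]
        refine mul_le_mul_of_nonneg_right ?_ hzβ.le
        simpa [div_eq_mul_inv] using h1
      have hmono : z ^ β ≤ (z + 1) ^ β :=
        Real.rpow_le_rpow hz.le (by linarith) (by linarith)
      have hsplit : z ^ (β - 1 - ε) = z ^ (-1 - ε) * z ^ β := by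
        rw [← Real.rpow_add hz]
        congr 1
        ring
      have hβz : 0 ≤ 1 + β / z := by positivity
      calc a (m + 1) ≤ (1 + γ / z) * a m + C * z ^ (β - 1 - ε) := h m
        _ ≤ (1 + β / z) * (q * z ^ β) + C * (z ^ (-1 - ε) * z ^ β) := by
          rw [hsplit]
          refine add_le_add ?_ le_rfl
          have h1 : 1 + γ / z ≤ 1 + β / z :=
            add_le_add le_rfl (div_le_div_of_nonneg_right hγ hz.le)
          exact (mul_le_mul_of_nonneg_right h1 (ha m)).trans (mul_le_mul_of_nonneg_left ih hβz)
        _ = q * ((1 + β / z) * z ^ β) + C * z ^ (-1 - ε) * z ^ β := by ring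
        _ ≤ q * (z + 1) ^ β + C * z ^ (-1 - ε) * (z + 1) ^ β :=
          add_le_add (mul_le_mul_of_nonneg_left hbern hq0)
            (mul_le_mul_of_nonneg_left hmono (mul_nonneg hC (hpos m)))
        _ = _ := by rw [hq]; ring
  refine ⟨a 0 / y ^ β + C * ∑' i : ℕ, (y + i) ^ (-1 - ε), ?_, fun m => (key m).trans ?_⟩
  · exact add_nonneg (div_nonneg (ha 0) (Real.rpow_pos_of_pos hy _).le)
      (mul_nonneg hC (tsum_nonneg hpos))
  · refine mul_le_mul_of_nonneg_right ?_ (Real.rpow_pos_of_pos (hym m) _).le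
    exact add_le_add le_rfl (mul_le_mul_of_nonneg_left
      (hsum.sum_le_tsum _ fun i _ => hpos i) hC)

/-- Growth of `E[Q_P]`: it is of order at most `n ^ β` for each `β > 1` with `β ≥ P / (1 + α)`.
By induction the totals `p < P` of the source terms admit a common exponent `β' < β`, so
no logarithmic correction appears. -/
lemma integral_cfgSum_le {α : ℝ} (hα : 0 < α) {k : ℕ} (hk : 2 ≤ k) {S : SimpleGraph (Fin k)}
    (hS : Good S) (P : ℕ) : ∀ β : ℝ, 1 < β → (P : ℝ) / (1 + α) ≤ β →
      ∃ K, 0 ≤ K ∧ ∀ m : ℕ,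
        ∫ G, cfgSum α P G ∂paLaw α S m ≤ K * ((k - 2 / (1 + α)) + m) ^ β := by
  induction P using Nat.strong_induction_on with
  | _ P ih =>
  intro β hβ hP
  have hα1 : 0 < 1 + α := by linarith
  have hy := (totalWt_eq hα hk 0).2
  have hZ : ∀ m : ℕ, _ := fun m => (totalWt_eq hα hk m).1
  set y := (k : ℝ) - 2 / (1 + α) with hydef
  have hym : ∀ m : ℕ, 0 < y + m := fun m => by positivity
  obtain ⟨β', hβ'1, hβ'β, hβ'P⟩ : ∃ β', 1 < β' ∧ β' < β ∧ ((P : ℝ) - 1) / (1 + α) ≤ β' := by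
    refine ⟨max (((P : ℝ) - 1) / (1 + α)) ((1 + β) / 2), lt_max_of_lt_right (by linarith),
      max_lt ?_ (by linarith), le_max_left _ _⟩
    refine lt_of_lt_of_le ?_ hP
    exact div_lt_div_of_pos_right (by linarith) hα1
  have ih' : ∀ p : ℕ, ∃ K, 0 ≤ K ∧ (p < P → ∀ m : ℕ,
      ∫ G, cfgSum α p G ∂paLaw α S m ≤ K * (y + m) ^ β') := by
    intro p
    by_cases hp : p < P
    · obtain ⟨K, hK, hK'⟩ := ih p hp β' hβ'1 (by
        refine le_trans (div_le_div_of_nonneg_right ?_ hα1.le) hβ'P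
        have : (p : ℝ) + 1 ≤ P := by exact_mod_cast hp
        linarith)
      exact ⟨K, hK, fun _ => hK'⟩
    · exact ⟨0, le_rfl, fun h => absurd h hp⟩
  choose K hK hK' using ih'
  have hyβ := Real.rpow_pos_of_pos hy (β' - 1)
  have hr : ∀ j, 0 ≤ rise α j := rise_nonneg hα.le
  refine le_rpow_of_recursion (γ := P / (1 + α)) (ε := β - β')
    (C := rise α P / y ^ (β' - 1) +
      ∑ j ∈ Finset.Ico 2 P, rise α j / (1 + α) * (((P - j + 1 : ℕ) : ℝ) * K (P - j + 1)))
    (fun m => ?_) hy hβ.le hP (by linarith) ?_ fun m => ?_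
  · exact integral_nonneg_of_ae ((ae_good α hS m).mono fun G hG => hG.cfgSum_nonneg hα P)
  · exact add_nonneg (div_nonneg (hr _) hyβ.le) (Finset.sum_nonneg fun j _ =>
      mul_nonneg (div_nonneg (hr j) hα1.le) (mul_nonneg (Nat.cast_nonneg _) (hK _)))
  · refine (integral_cfgSum_succ_le hα hk hS P m).trans ?_
    rw [hZ m, add_assoc, add_mul (rise α P / _), show β - 1 - (β - β') = β' - 1 by ring]
    have hz := hym m
    set z := y + (m : ℝ) with hz_def
    refine add_le_add (le_of_eq ?_) (add_le_add ?_ ?_)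
    · rw [div_div]
    · rw [div_mul_eq_mul_div, le_div_iff₀ hyβ]
      refine mul_le_mul_of_nonneg_left ?_ (hr P)
      exact Real.rpow_le_rpow hy.le (by rw [hz_def]; linarith [(m.cast_nonneg : (0 : ℝ) ≤ m)])
        (by linarith)
    · rw [Finset.sum_mul]
      refine Finset.sum_le_sum fun j hj => ?_
      rw [Finset.mem_Ico] at hj
      calc rise α j / ((1 + α) * z) * (((P - j + 1 : ℕ) : ℝ) *
            ∫ G, cfgSum α (P - j + 1) G ∂paLaw α S m)
          ≤ rise α j / ((1 + α) * z) * (((P - j + 1 : ℕ) : ℝ) * (K (P - j + 1) * z ^ β')) := by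
            refine mul_le_mul_of_nonneg_left (mul_le_mul_of_nonneg_left
              (hK' _ (by omega) m) (Nat.cast_nonneg _)) (div_nonneg (hr j) (by positivity))
        _ = _ := by
            rw [Real.rpow_sub_one hz.ne']
            field_simp

/-- **Proposition 3.6.** If all decorations of `τ` are `≥ 2` and
`|ℓ| > 1+α`, then for every seed of size `k ≥ 2`,
`E[F_{τ+τ}(T_n^S)] = O(n^{2|ℓ|/(1+α)})`. -/
theorem overlap_second_moment_bound (α : ℝ) (hα : 0 < α) (τ : DecTree)
    (hτ : τ.tree.IsTree) (hdec : ∀ u, 2 ≤ τ.dec u) (hsum : 1 + α < (τ.decSum : ℝ))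
    (k : ℕ) (hk : 2 ≤ k) (S : SimpleGraph (Fin k)) (hS : S.IsTree) :
    (fun m => ∫ G, obsOverlapG τ.tree τ.dec G ∂paLaw α S m) =O[atTop]
      fun m => ((k + m : ℕ) : ℝ) ^ (2 * (τ.decSum : ℝ) / (1 + α)) := by

  classical
  have hα1 : 0 < 1 + α := by linarith
  have hGood := good_of_isTree hk hS
  have hpr := isProbabilityMeasure_paLaw hα hk hGood
  set D := (2 * (τ.decSum : ℝ)) / (1 + α) with hD
  -- The exponent exceeds `2`, which is where the hypothesis `|ℓ| > 1 + α` enters.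
  have hD1 : 1 < D := by
    rw [hD, lt_div_iff₀ hα1]
    linarith
  obtain ⟨K, hK, hK'⟩ := integral_cfgSum_le hα hk hGood (2 * τ.decSum) D hD1
    (by rw [hD]; push_cast; exact le_rfl)
  set M := ((2 * τ.decSum : ℕ) : ℝ) ^ Fintype.card (Fin τ.n ⊕ Fin τ.n) with hM
  have hM0 : 0 ≤ M := by positivity
  refine IsBigO.of_bound (M * K) (Eventually.of_forall fun m => ?_)
  have h0 : 0 ≤ ∫ G, obsOverlapG τ.tree τ.dec G ∂paLaw α S m :=
    integral_nonneg fun G => obsOverlapG_nonneg _ _ _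
  have hn : (0 : ℝ) ≤ ((k + m : ℕ) : ℝ) := Nat.cast_nonneg _
  rw [Real.norm_of_nonneg h0, Real.norm_of_nonneg (Real.rpow_nonneg hn _)]
  have hy := (totalWt_eq hα hk 0).2
  calc ∫ G, obsOverlapG τ.tree τ.dec G ∂paLaw α S m
      ≤ ∫ G, M * cfgSum α (2 * τ.decSum) G ∂paLaw α S m :=
        integral_mono_ae (integrable_graph _ _) (integrable_graph _ _)
          ((ae_good α hGood m).mono fun G hG =>
            hG.obsOverlapG_le hα hτ.connected.preconnected hdec)
    _ = M * ∫ G, cfgSum α (2 * τ.decSum) G ∂paLaw α S m := integral_const_mul _ _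
    _ ≤ M * (K * ((k - 2 / (1 + α)) + m) ^ D) := mul_le_mul_of_nonneg_left (hK' m) hM0
    _ ≤ M * (K * ((k + m : ℕ) : ℝ) ^ D) := by
        have : (k - 2 / (1 + α)) + m ≤ ((k + m : ℕ) : ℝ) := by
          push_cast
          have : 0 ≤ 2 / (1 + α) := by positivity
          linarith
        gcongr
    _ = M * K * ((k + m : ℕ) : ℝ) ^ D := by ring

end AffinePA
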